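/- arXiv:1408.0529 — 5 statements merged into one kernel-verified Lean document; each statement's English description precedes it below -/
import Mathlib

section
/- Let N ≥ 2 and let ν₁ = (1,2,…,N−1) and ν₂ = (2,3,…,N) be cyclic permutations in the symmetric group Sym({1,…,N}). Then the subgroup generated by ν₁ and ν₂ equals the alternating group Alt({1,…,N}) if N is even, and equals the full symmetric group Sym({1,…,N}) if N is odd. -/
open Equiv Equiv.Perm in
theorem aux_sign {α : Type*} [DecidableEq α] [Fintype α] (x : α) (l : List α)
    (h : (x :: l).Nodup) : sign (x :: l).formPerm = (-1) ^ l.length := by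
  induction l generalizing x with
  | nil => simp
  | cons y l ih =>
    have hxy : x ≠ y := by
      rintro rfl
      simp at h
    rw [List.formPerm_cons_cons, Perm.sign_mul, ih y (List.nodup_cons.1 h).2, sign_swap hxy,
      List.length_cons, pow_succ']

open Equiv Equiv.Perm in
theorem aux_sign' {α : Type*} [DecidableEq α] [Fintype α] (l : List α) (n : ℕ)
    (h : l.Nodup) (hl : l.length = n + 1) : sign l.formPerm = (-1) ^ n := by
  cases l with
  | nil => simp at hl
  | cons x l =>
    rw [aux_sign x l h]
    simp at hl
    rw [hl]

theorem aux_nodup1 (N : ℕ) : ((List.finRange N).take (N - 1)).Nodup :=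
  (List.nodup_finRange N).sublist (List.take_sublist _ _)

theorem aux_nodup2 (N : ℕ) : ((List.finRange N).drop 1).Nodup :=
  (List.nodup_finRange N).sublist (List.drop_sublist _ _)

theorem aux_pow1 (n k i : ℕ) (hi : i < n + 2) :
    (((List.finRange (n+3)).take (n + 3 - 1)).formPerm ^ k) ⟨i, by omega⟩ =
      ⟨(i + k) % (n + 2), by have := Nat.mod_lt (i+k) (show 0 < n+2 by omega); omega⟩ := by
  have := List.formPerm_pow_apply_getElem _ (aux_nodup1 (n+3)) k i (by simp; omega)
  simpa using this

theorem aux_pow2 (n k i : ℕ) (hi : i < n + 2) :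
    (((List.finRange (n+3)).drop 1).formPerm ^ k) ⟨i + 1, by omega⟩ =
      ⟨(i + k) % (n + 2) + 1, by have := Nat.mod_lt (i+k) (show 0 < n+2 by omega); omega⟩ := by
  have := List.formPerm_pow_apply_getElem _ (aux_nodup2 (n+3)) k i (by simp; omega)
  simpa [add_comm 1] using this

theorem aux_last1 (n : ℕ) :
    ((List.finRange (n+3)).take (n + 3 - 1)).formPerm ⟨n + 2, by omega⟩ = ⟨n + 2, by omega⟩ := by
  apply List.formPerm_apply_of_notMem
  intro h
  obtain ⟨i, hi, h⟩ := List.getElem_of_mem h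
  simp at h hi
  omega

theorem aux_zero2 (n : ℕ) :
    ((List.finRange (n+3)).drop 1).formPerm ⟨0, by omega⟩ = ⟨0, by omega⟩ := by
  apply List.formPerm_apply_of_notMem
  intro h
  obtain ⟨i, hi, h⟩ := List.getElem_of_mem h
  simp [Fin.ext_iff] at h

open Equiv in
theorem aux_rel (n : ℕ) :
    ((List.finRange (n+3)).take (n + 3 - 1)).formPerm = ((List.finRange (n+3)).drop 1).formPerm *
      (swap (⟨0, by omega⟩ : Fin (n+3)) ⟨n+1, by omega⟩ * swap ⟨0, by omega⟩ ⟨n+2, by omega⟩) := by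
  ext ⟨i, hi⟩ : 1
  have h1 := aux_pow1 n 1
  have h2 := aux_pow2 n 1
  simp only [pow_one] at h1 h2
  rw [Perm.mul_apply, Perm.mul_apply]
  rcases Nat.eq_zero_or_pos i with rfl | h0
  · rw [swap_apply_left, swap_apply_of_ne_of_ne (by simp) (by simp), h1 0 (by omega),
      h2 (n+1) (by omega)]
    simp
  rcases Nat.lt_or_ge i (n+1) with h | h
  · rw [swap_apply_of_ne_of_ne (a := (⟨0, by omega⟩ : Fin (n+3))) (b := ⟨n+2, by omega⟩) (x := ⟨_, hi⟩) (by simp; omega) (by simp; omega),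
      swap_apply_of_ne_of_ne (by simp; omega) (by simp; omega), h1 i (by omega)]
    obtain ⟨j, rfl⟩ : ∃ j, i = j + 1 := ⟨i - 1, by omega⟩
    rw [h2 j (by omega)]
    simp
    rw [Nat.mod_eq_of_lt (by omega), Nat.mod_eq_of_lt (by omega)]
  rcases Nat.eq_or_lt_of_le h with rfl | h
  · rw [swap_apply_of_ne_of_ne (a := (⟨0, by omega⟩ : Fin (n+3))) (b := ⟨n+2, by omega⟩) (x := ⟨_, hi⟩) (by simp) (by simp),
      swap_apply_right, h1 _ (by omega), aux_zero2]
    simp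
  · obtain rfl : i = n + 2 := by omega
    rw [swap_apply_right, swap_apply_left, aux_last1, h2 n (by omega)]
    simp

open Equiv in
theorem aux_trans (n : ℕ) (H : Subgroup (Perm (Fin (n+3))))
    (h1 : ((List.finRange (n+3)).take (n + 3 - 1)).formPerm ∈ H)
    (h2 : ((List.finRange (n+3)).drop 1).formPerm ∈ H) (a b : Fin (n+3)) (hab : a ≠ b) :
    ∃ g ∈ H, g a = ⟨n+2, by omega⟩ ∧ g b = ⟨0, by omega⟩ := by
  have key1 : ∀ a : Fin (n+3), ∃ g ∈ H, g a = ⟨n+2, by omega⟩ := by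
    have pos : ∀ i (hi : i < n + 2), ∃ g ∈ H, g ⟨i+1, by omega⟩ = ⟨n+2, by omega⟩ := by
      intro i hi
      refine ⟨_, pow_mem h2 (n + 1 - i), ?_⟩
      rw [aux_pow2 n _ i hi]
      simp [show i + (n + 1 - i) = n + 1 by omega]
    rintro ⟨i, hi⟩
    rcases i with _ | i
    · obtain ⟨g, hg, h⟩ := pos 0 (by omega)
      refine ⟨_, mul_mem hg (pow_mem h1 1), ?_⟩
      rw [Perm.mul_apply, aux_pow1 n 1 0 (by omega), ← h]
      simp
    · exact pos i (by omega)
  obtain ⟨g, hg, h⟩ := key1 a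
  obtain ⟨⟨j, hj⟩, hgb⟩ : ∃ j, g b = j := ⟨_, rfl⟩
  have hj' : j ≠ n + 2 := by
    rintro rfl
    exact hab (g.injective (h.trans hgb.symm))
  refine ⟨_, mul_mem (pow_mem h1 (n + 2 - j)) hg, ?_, ?_⟩
  · rw [Perm.mul_apply, h]
    exact Perm.pow_apply_eq_self_of_apply_eq_self (aux_last1 n) _
  · rw [Perm.mul_apply, hgb, aux_pow1 n _ j (by omega)]
    simp [show j + (n + 2 - j) = n + 2 by omega]

open Equiv in
theorem aux_alt (n : ℕ) (H : Subgroup (Perm (Fin (n+3))))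
    (h1 : ((List.finRange (n+3)).take (n + 3 - 1)).formPerm ∈ H)
    (h2 : ((List.finRange (n+3)).drop 1).formPerm ∈ H) :
    alternatingGroup (Fin (n+3)) ≤ H := by
  refine Perm.alternatingGroup_le_of_isPreprimitive_of_isThreeCycle_mem (G := H) ?_
    (g := swap (⟨0, by omega⟩ : Fin (n+3)) ⟨n+1, by omega⟩ * swap ⟨0, by omega⟩ ⟨n+2, by omega⟩)
    (Perm.isThreeCycle_swap_mul_swap_same (by simp) (by simp) (by simp)) ?_
  · apply MulAction.isPreprimitive_of_is_two_pretransitive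
    rw [MulAction.is_two_pretransitive_iff]
    intro a b c d hab hcd
    obtain ⟨g, hg, ga, gb⟩ := aux_trans n H h1 h2 a b hab
    obtain ⟨k, hk, kc, kd⟩ := aux_trans n H h1 h2 c d hcd
    refine ⟨⟨k⁻¹ * g, mul_mem (inv_mem hk) hg⟩, ?_, ?_⟩
    · change (k⁻¹ * g) a = c
      rw [Perm.mul_apply, ga, ← kc, ← Perm.mul_apply, inv_mul_cancel, Perm.one_apply]
    · change (k⁻¹ * g) b = d
      rw [Perm.mul_apply, gb, ← kd, ← Perm.mul_apply, inv_mul_cancel, Perm.one_apply]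
  · rw [aux_rel] at h1
    exact (H.mul_mem_cancel_left h2).1 h1


/-- in `Sym({1,…,N})` (modeled as `Equiv.Perm (Fin N)`, 0-indexed),
the cycles `ν₁ = (1,2,…,N−1)` and `ν₂ = (2,3,…,N)` generate `Alt` if `N` is even
and `Sym` if `N` is odd. -/
theorem stmt14 (N : ℕ) (hN : 2 ≤ N) :
    (Even N →
      Subgroup.closure
          {((List.finRange N).take (N - 1)).formPerm,
           ((List.finRange N).drop 1).formPerm} = alternatingGroup (Fin N)) ∧
    (Odd N →
      Subgroup.closure
          {((List.finRange N).take (N - 1)).formPerm,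
           ((List.finRange N).drop 1).formPerm} = (⊤ : Subgroup (Equiv.Perm (Fin N)))) := by
  have s1 : Equiv.Perm.sign ((List.finRange N).take (N - 1)).formPerm = (-1) ^ (N - 2) :=
    aux_sign' _ _ (aux_nodup1 N) (by simp; omega)
  have s2 : Equiv.Perm.sign ((List.finRange N).drop 1).formPerm = (-1) ^ (N - 2) :=
    aux_sign' _ _ (aux_nodup2 N) (by simp; omega)
  have hle : alternatingGroup (Fin N) ≤ Subgroup.closure
          {((List.finRange N).take (N - 1)).formPerm,
           ((List.finRange N).drop 1).formPerm} := by
    rcases Nat.eq_or_lt_of_le hN with rfl | h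
    · intro g hg
      have : g = 1 := by
        have key : ∀ g : Equiv.Perm (Fin 2), Equiv.Perm.sign g = 1 → g = 1 := by decide
        exact key g (Equiv.Perm.mem_alternatingGroup.1 hg)
      rw [this]
      exact one_mem _
    · obtain ⟨n, rfl⟩ : ∃ n, N = n + 3 := ⟨N - 3, by omega⟩
      exact aux_alt n _ (Subgroup.subset_closure (by simp)) (Subgroup.subset_closure (by simp))
  constructor
  · intro he
    have he' : Even (N - 2) := by
      rw [Nat.even_sub hN]; simp [he]
    rw [he'.neg_one_pow] at s1 s2
    refine le_antisymm ?_ hle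
    rw [Subgroup.closure_le]
    rintro g (rfl | rfl)
    · exact Equiv.Perm.mem_alternatingGroup.2 s1
    · exact Equiv.Perm.mem_alternatingGroup.2 s2
  · intro ho
    have ho' : Odd (N - 2) := by
      rw [Nat.odd_sub hN]; simp [ho]
    rw [ho'.neg_one_pow] at s1
    rw [eq_top_iff]
    intro g _
    rcases Int.units_eq_one_or (Equiv.Perm.sign g) with h | h
    · exact hle (Equiv.Perm.mem_alternatingGroup.2 h)
    · refine (Subgroup.mul_mem_cancel_right _
        (Subgroup.subset_closure (Set.mem_insert _ _))).1 (hle ?_)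
      rw [Equiv.Perm.mem_alternatingGroup, Equiv.Perm.sign_mul, h, s1]
      simp
end

section
/- Let N be odd and let ν₁ = (1,2,…,N) and ν₂ = (1,2) in Sym({1,…,N}). Then the subgroup generated by ν₁ and ν₂ν₁ν₂ equals the alternating group Alt({1,…,N}). -/
/-- for odd `N`, with `ν₁ = (1,2,…,N)` and `ν₂ = (1,2)` in
`Sym({1,…,N})` (modeled as `Equiv.Perm (Fin N)`, 0-indexed), the subgroup
generated by `ν₁` and `ν₂ν₁ν₂` is the alternating group. -/
theorem stmt15 (N : ℕ) (hN : 2 ≤ N) (hodd : Odd N) :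
    Subgroup.closure
        {(List.finRange N).formPerm,
         Equiv.swap (⟨0, by omega⟩ : Fin N) ⟨1, by omega⟩ *
           (List.finRange N).formPerm *
           Equiv.swap (⟨0, by omega⟩ : Fin N) ⟨1, by omega⟩} =
      alternatingGroup (Fin N) := by
  have h3 : 3 ≤ N := by
    obtain ⟨k, rfl⟩ := hodd
    omega
  have hnd := List.nodup_finRange N
  have hcyc : ((List.finRange N).formPerm).IsCycle :=
    List.isCycle_formPerm hnd (by simpa using hN)
  have hsupp : ((List.finRange N).formPerm).support = Finset.univ := by
    rw [List.support_formPerm_of_nodup _ hnd]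
    · ext x; simp
    · intro x hx
      have := congrArg List.length hx
      simp at this
      omega
  have h01 : (List.finRange N).formPerm ⟨0, by omega⟩ = ⟨1, by omega⟩ := by
    have := List.formPerm_apply_lt_getElem (List.finRange N) hnd 0 (by simp; omega)
    simpa using this
  have h12 : (List.finRange N).formPerm ⟨1, by omega⟩ = ⟨2, by omega⟩ := by
    have := List.formPerm_apply_lt_getElem (List.finRange N) hnd 1 (by simp; omega)
    simpa using this
  have htop := Equiv.Perm.closure_cycle_adjacent_swap hcyc hsupp ⟨0, by omega⟩
  rw [h01] at htop
  have hsign : Equiv.Perm.sign (List.finRange N).formPerm = 1 := by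
    rw [hcyc.sign, hsupp, Finset.card_univ, Fintype.card_fin, hodd.neg_one_pow, neg_neg]
  generalize (List.finRange N).formPerm = c at *
  have hss : Equiv.swap (⟨0, by omega⟩ : Fin N) ⟨1, by omega⟩ *
    Equiv.swap (⟨0, by omega⟩ : Fin N) ⟨1, by omega⟩ = 1 := Equiv.swap_mul_self _ _
  have hc3 : (Equiv.swap (⟨0, by omega⟩ : Fin N) ⟨1, by omega⟩ * c *
      Equiv.swap (⟨0, by omega⟩ : Fin N) ⟨1, by omega⟩ * c⁻¹).IsThreeCycle := by
    have : Equiv.swap (⟨0, by omega⟩ : Fin N) ⟨1, by omega⟩ * c *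
      Equiv.swap (⟨0, by omega⟩ : Fin N) ⟨1, by omega⟩ * c⁻¹ =
      Equiv.swap (⟨1, by omega⟩ : Fin N) ⟨0, by omega⟩ *
      Equiv.swap (⟨1, by omega⟩ : Fin N) ⟨2, by omega⟩ := by
      rw [mul_assoc, mul_assoc, ← mul_assoc c, ← Equiv.swap_apply_apply, h01, h12,
        Equiv.swap_comm]
    rw [this]
    apply Equiv.Perm.isThreeCycle_swap_mul_swap_same <;> simp
  generalize hs : Equiv.swap (⟨0, by omega⟩ : Fin N) ⟨1, by omega⟩ = s at *
  have hsinv : s⁻¹ = s := inv_eq_of_mul_eq_one_left hss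
  have hsc : Equiv.Perm.sign s * Equiv.Perm.sign s = 1 := by
    rw [← map_mul, hss, map_one]
  apply le_antisymm
  · rw [Subgroup.closure_le]
    rintro x (rfl | rfl)
    · exact hsign
    · simp [hsign, hsc]
  · set H := Subgroup.closure {c, s * c * s} with hH
    have hcH : c ∈ H := Subgroup.subset_closure (by simp)
    have hdH : s * c * s ∈ H := Subgroup.subset_closure (by simp)
    have hconj : ∀ x ∈ H, s * x * s⁻¹ ∈ H := by
      intro x hx
      have : H ≤ H.comap (MulAut.conj s).toMonoidHom := by
        conv_lhs => rw [hH]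
        rw [Subgroup.closure_le]
        rintro x (rfl | rfl)
        · simpa [hsinv] using hdH
        · have : s * (s * c * s) * s = c := by
            rw [show s * (s * c * s) * s = (s * s) * c * (s * s) by group, hss]; simp
          simpa [hsinv, this] using hcH
      simpa using this hx
    have hN' : H.Normal := by
      constructor
      intro x hx g
      have hg : g ∈ Subgroup.closure {c, s} := by rw [htop]; trivial
      induction hg using Subgroup.closure_induction'' generalizing x with
      | mem y hy =>
        rcases hy with rfl | rfl
        · exact H.mul_mem (H.mul_mem hcH hx) (H.inv_mem hcH)
        · exact hconj x hx
      | inv_mem y hy =>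
        rcases hy with rfl | rfl
        · exact H.mul_mem (H.mul_mem (H.inv_mem hcH) hx) (H.inv_mem (H.inv_mem hcH))
        · rw [hsinv]; exact hconj x hx
      | one => simpa using hx
      | mul a b _ _ ha hb =>
        have := ha _ (hb x hx)
        simpa [mul_assoc] using this
    rw [← Equiv.Perm.closure_three_cycles_eq_alternating, Subgroup.closure_le]
    intro t ht
    have : IsConj (s * c * s * c⁻¹) t := by
      rw [Equiv.Perm.isConj_iff_cycleType_eq]
      exact hc3.trans (Eq.symm ht)
    obtain ⟨g, rfl⟩ := isConj_iff.1 this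
    exact hN'.conj_mem _ (H.mul_mem hdH (H.inv_mem hcH)) g
end

section
/- Let B and C be finite sets, each with at least 3 elements, with B ∩ C ≠ ∅, and let A = B ∪ C. Identifying Sym(B) and Sym(C) with the subgroups of Sym(A) consisting of the permutations fixing A ∖ B (respectively A ∖ C) pointwise, one has: the subgroup of Sym(A) generated by Alt(B) and Alt(C) equals Alt(A), and the subgroup of Sym(A) generated by Alt(B) and Sym(C) equals Sym(A). -/
set_option linter.unusedSimpArgs false in
open Equiv in
lemma aux_comm {α : Type*} [DecidableEq α] (c x y b d : α)
    (h1 : x ≠ c) (h2 : y ≠ c) (h3 : b ≠ c) (h4 : d ≠ c) (h5 : x ≠ y) (h6 : x ≠ b)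
    (h7 : x ≠ d) (h8 : y ≠ b) (h9 : y ≠ d) (h10 : b ≠ d) :
    swap c x * swap c y = (swap c d * swap c y) * (swap c b * swap c x) *
      (swap c d * swap c y)⁻¹ * (swap c b * swap c x)⁻¹ := by
  ext z
  simp only [mul_inv_rev, swap_inv, Perm.mul_apply]
  by_cases e1 : z = c
  · subst e1; simp [swap_apply_def, *, Ne.symm, h1.symm, h2.symm, h3.symm, h4.symm, h5.symm, h6.symm, h7.symm, h8.symm, h9.symm, h10.symm]
  by_cases e2 : z = x
  · subst e2; simp [swap_apply_def, *, h1.symm, h2.symm, h3.symm, h4.symm, h5.symm, h6.symm, h7.symm, h8.symm, h9.symm, h10.symm]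
  by_cases e3 : z = y
  · subst e3; simp [swap_apply_def, *, h1.symm, h2.symm, h3.symm, h4.symm, h5.symm, h6.symm, h7.symm, h8.symm, h9.symm, h10.symm]
  by_cases e4 : z = b
  · subst e4; simp [swap_apply_def, *, h1.symm, h2.symm, h3.symm, h4.symm, h5.symm, h6.symm, h7.symm, h8.symm, h9.symm, h10.symm]
  by_cases e5 : z = d
  · subst e5; simp [swap_apply_def, *, h1.symm, h2.symm, h3.symm, h4.symm, h5.symm, h6.symm, h7.symm, h8.symm, h9.symm, h10.symm]
  simp [swap_apply_def, *]

open Equiv in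
lemma aux_dich {α : Type*} [Fintype α] [DecidableEq α] (H : Subgroup (Perm α)) (c : α)
    (hT : ∀ x y, x ≠ c → y ≠ c → swap c x * swap c y ∈ H) (σ : Perm α) :
    σ ∈ H ∨ ∀ x, x ≠ c → swap c x * σ ∈ H := by
  have step : ∀ a (τ : Perm α), (τ ∈ H ∨ ∀ x, x ≠ c → swap c x * τ ∈ H) →
      (swap c a * τ ∈ H ∨ ∀ x, x ≠ c → swap c x * (swap c a * τ) ∈ H) := by
    intro a τ h
    by_cases hac : a = c
    · subst hac; simpa [swap_self, ← Perm.one_def] using h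
    rcases h with h | h
    · right
      intro x hx
      rw [← mul_assoc]
      exact H.mul_mem (hT x a hx hac) h
    · exact Or.inl (h a hac)
  induction σ using Perm.swap_induction_on with
  | one => exact Or.inl H.one_mem
  | swap_mul f x y hxy ih =>
    by_cases hx : x = c
    · subst hx; exact step _ _ ih
    by_cases hy : y = c
    · subst hy; rw [swap_comm]; exact step _ _ ih
    have e : swap x y = swap c x * swap c y * swap c x := by
      ext z
      simp only [Perm.mul_apply, swap_apply_def]
      split_ifs <;> simp_all
    rw [e, mul_assoc, mul_assoc]
    exact step _ _ (step _ _ (step _ _ ih))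

open Equiv in
lemma aux_in {α : Type*} [Fintype α] [DecidableEq α] (B : Finset α) (c x y : α)
    (hc : c ∈ B) (hxB : x ∈ B) (hyB : y ∈ B) (hx : x ≠ c) (hy : y ≠ c) :
    swap c x * swap c y ∈
      {σ : Equiv.Perm α | (∀ x ∉ B, σ x = x) ∧ σ ∈ alternatingGroup α} := by
  refine ⟨fun z hz => ?_, ?_⟩
  · have h1 : z ≠ c := fun h => hz (h ▸ hc)
    have h2 : z ≠ x := fun h => hz (h ▸ hxB)
    have h3 : z ≠ y := fun h => hz (h ▸ hyB)
    rw [Perm.mul_apply, swap_apply_of_ne_of_ne h1 h3, swap_apply_of_ne_of_ne h1 h2]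
  · rw [Perm.mem_alternatingGroup, map_mul, Perm.sign_swap hx.symm, Perm.sign_swap hy.symm]
    rfl

lemma aux_pick {α : Type*} [DecidableEq α] (B : Finset α) (hB : 3 ≤ B.card) (c x : α) :
    ∃ b ∈ B, b ≠ c ∧ b ≠ x := by
  have h : ({c, x} : Finset α).card < B.card := lt_of_le_of_lt Finset.card_le_two (by omega)
  obtain ⟨b, hb, hb2⟩ := Finset.exists_mem_notMem_of_card_lt_card h
  simp at hb2
  exact ⟨b, hb, hb2.1, hb2.2⟩

open Equiv in
lemma aux_mixed {α : Type*} [Fintype α] [DecidableEq α] (H : Subgroup (Perm α)) (B C : Finset α)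
    (hB : 3 ≤ B.card) (hC : 3 ≤ C.card) (c : α)
    (hTB : ∀ x y, x ∈ B → y ∈ B → x ≠ c → y ≠ c → swap c x * swap c y ∈ H)
    (hTC : ∀ x y, x ∈ C → y ∈ C → x ≠ c → y ≠ c → swap c x * swap c y ∈ H)
    (x y : α) (hx : x ≠ c) (hy : y ≠ c) (hxB : x ∈ B) (hyC : y ∈ C) :
    swap c x * swap c y ∈ H := by
  have tr : ∀ b, swap c x * swap c b ∈ H → swap c b * swap c y ∈ H →
      swap c x * swap c y ∈ H := by
    intro b h1 h2
    have := H.mul_mem h1 h2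
    rwa [mul_assoc, swap_mul_self_mul] at this
  by_cases hyB : y ∈ B
  · exact hTB x y hxB hyB hx hy
  by_cases hxC : x ∈ C
  · exact hTC x y hxC hyC hx hy
  obtain ⟨b, hb, hbc, hbx⟩ := aux_pick B hB c x
  obtain ⟨d, hd, hdc, hdy⟩ := aux_pick C hC c y
  by_cases hbC : b ∈ C
  · exact tr b (hTB _ _ hxB hb hx hbc) (hTC _ _ hbC hyC hbc hy)
  have p := hTC d y hd hyC hdc hy
  have q := hTB b x hb hxB hbc hx
  rw [aux_comm c x y b d hx hy hbc hdc (fun h => hyB (h ▸ hxB)) hbx.symm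
    (fun h => hxC (h ▸ hd)) (fun h => hyB (h ▸ hb)) hdy.symm (fun h => hbC (h ▸ hd))]
  exact H.mul_mem (H.mul_mem (H.mul_mem p q) (H.inv_mem p)) (H.inv_mem q)

/-- if `B`, `C` are finite sets with at least 3 elements each,
`B ∩ C ≠ ∅` and `A = B ∪ C`, then (identifying a permutation of a subset with
its extension by the identity, i.e. with the permutations of `A` fixing the
complement pointwise) `⟨Alt(B), Alt(C)⟩ = Alt(A)` and `⟨Alt(B), Sym(C)⟩ = Sym(A)`. -/
theorem stmt16 {α : Type*} [Fintype α] [DecidableEq α]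
    (B C : Finset α) (hB : 3 ≤ B.card) (hC : 3 ≤ C.card)
    (hBC : (B ∩ C).Nonempty) (hcover : B ∪ C = Finset.univ) :
    Subgroup.closure
        ({σ : Equiv.Perm α | (∀ x ∉ B, σ x = x) ∧ σ ∈ alternatingGroup α} ∪
         {σ : Equiv.Perm α | (∀ x ∉ C, σ x = x) ∧ σ ∈ alternatingGroup α}) =
      alternatingGroup α ∧
    Subgroup.closure
        ({σ : Equiv.Perm α | (∀ x ∉ B, σ x = x) ∧ σ ∈ alternatingGroup α} ∪
         {σ : Equiv.Perm α | ∀ x ∉ C, σ x = x}) =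
      (⊤ : Subgroup (Equiv.Perm α)) := by
  classical
  obtain ⟨c, hc⟩ := hBC
  obtain ⟨hcB, hcC⟩ := Finset.mem_inter.1 hc
  obtain ⟨d, hd, hdc, -⟩ := aux_pick C hC c c
  have main : Subgroup.closure
        ({σ : Equiv.Perm α | (∀ x ∉ B, σ x = x) ∧ σ ∈ alternatingGroup α} ∪
         {σ : Equiv.Perm α | (∀ x ∉ C, σ x = x) ∧ σ ∈ alternatingGroup α}) =
      alternatingGroup α := by
    have hle : Subgroup.closure
        ({σ : Equiv.Perm α | (∀ x ∉ B, σ x = x) ∧ σ ∈ alternatingGroup α} ∪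
         {σ : Equiv.Perm α | (∀ x ∉ C, σ x = x) ∧ σ ∈ alternatingGroup α}) ≤
      alternatingGroup α := by
      rw [Subgroup.closure_le]
      rintro σ (h | h)
      · exact h.2
      · exact h.2
    refine le_antisymm hle ?_
    have hTB := fun x y hxB hyB hx hy => Subgroup.subset_closure (Set.mem_union_left
      {σ : Equiv.Perm α | (∀ x ∉ C, σ x = x) ∧ σ ∈ alternatingGroup α}
      (aux_in B c x y hcB hxB hyB hx hy))
    have hTC := fun x y hxC hyC hx hy => Subgroup.subset_closure (Set.mem_union_right
      {σ : Equiv.Perm α | (∀ x ∉ B, σ x = x) ∧ σ ∈ alternatingGroup α}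
      (aux_in C c x y hcC hxC hyC hx hy))
    have hT : ∀ x y, x ≠ c → y ≠ c → Equiv.swap c x * Equiv.swap c y ∈ Subgroup.closure
        ({σ : Equiv.Perm α | (∀ x ∉ B, σ x = x) ∧ σ ∈ alternatingGroup α} ∪
         {σ : Equiv.Perm α | (∀ x ∉ C, σ x = x) ∧ σ ∈ alternatingGroup α}) := by
      intro x y hx hy
      have hxm : x ∈ B ∪ C := hcover ▸ Finset.mem_univ x
      have hym : y ∈ B ∪ C := hcover ▸ Finset.mem_univ y
      rcases Finset.mem_union.1 hxm with hxB | hxC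
      · rcases Finset.mem_union.1 hym with hyB | hyC
        · exact hTB x y hxB hyB hx hy
        · exact aux_mixed _ B C hB hC c hTB hTC x y hx hy hxB hyC
      · rcases Finset.mem_union.1 hym with hyB | hyC
        · exact aux_mixed _ C B hC hB c hTC hTB x y hx hy hxC hyB
        · exact hTC x y hxC hyC hx hy
    intro σ hσ
    rcases aux_dich _ c hT σ with h | h
    · exact h
    · exfalso
      have h1 := hle (h d hdc)
      rw [Equiv.Perm.mem_alternatingGroup] at h1 hσ
      rw [map_mul, hσ, Equiv.Perm.sign_swap hdc.symm] at h1
      exact absurd h1 (by decide)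
  refine ⟨main, ?_⟩
  have hle : alternatingGroup α ≤ Subgroup.closure
        ({σ : Equiv.Perm α | (∀ x ∉ B, σ x = x) ∧ σ ∈ alternatingGroup α} ∪
         {σ : Equiv.Perm α | ∀ x ∉ C, σ x = x}) := by
    refine main.symm.le.trans (Subgroup.closure_mono ?_)
    exact Set.union_subset_union_right _ (fun σ h => h.1)
  have hs : Equiv.swap c d ∈ Subgroup.closure
        ({σ : Equiv.Perm α | (∀ x ∉ B, σ x = x) ∧ σ ∈ alternatingGroup α} ∪
         {σ : Equiv.Perm α | ∀ x ∉ C, σ x = x}) := by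
    apply Subgroup.subset_closure
    right
    intro z hz
    exact Equiv.swap_apply_of_ne_of_ne (fun h => hz (h ▸ hcC)) (fun h => hz (h ▸ hd))
  rw [eq_top_iff]
  intro σ _
  rcases Int.units_eq_one_or (Equiv.Perm.sign σ) with h | h
  · exact hle (Equiv.Perm.mem_alternatingGroup.2 h)
  · have h2 : Equiv.swap c d * σ ∈ alternatingGroup α := by
      rw [Equiv.Perm.mem_alternatingGroup, map_mul, h, Equiv.Perm.sign_swap hdc.symm]
      rfl
    exact (Subgroup.mul_mem_cancel_left _ hs).1 (hle h2)
end

section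
/- Let n ≥ 1 and let A = {a, b, c, d, e, f, g₁,…,g_n, h₁,…,h_n, z} consist of 2n+7 distinct letters. Let π̃ be the pair on A with π̃₀ listing A in the order a, b, c, d, e, g₁, h₁, g₂, h₂, …, g_n, h_n, f, z and π̃₁ listing A in the order z, d, h₁, g₁, h₂, g₂, …, h_n, g_n, c, b, f, e, a. Then π̃ is irreducible, and the pair π with π₀ listing A in the order a, b, c, d, h_n, f, h_{n−1}, g_n, h_{n−2}, g_{n−1}, …, h₁, g₂, e, g₁, z and π₁ listing A in the order z, d, c, b, f, h_n, g_n, h_{n−1}, g_{n−1}, h_{n−2}, …, g₂, h₁, g₁, e, a belongs to the Rauzy class R(π̃). -/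
open Equiv

/-- A (labeled) pair on alphabet `A`: two bijections from `A` to positions.
Positions are `Fin (Fintype.card A)`, 0-indexed: position `j : Fin N`
corresponds to the position `j+1 ∈ {1,…,N}` of the paper. -/
abbrev RPair (A : Type*) [Fintype A] := Bool → (A ≃ Fin (Fintype.card A))

variable {A : Type*} [Fintype A]

/-- Irreducibility: `π₁(π₀⁻¹({1,…,k})) = {1,…,k}` only for `k = N`. -/
def PairIrreducible (π : RPair A) : Prop :=
  ∀ k : Fin (Fintype.card A),
    (∀ x : A, π false x ≤ k → π true x ≤ k) → (k : ℕ) + 1 = Fintype.card A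

/-- Type-ε right Rauzy induction sends `π` to `π'`.  Here `zc = π_ε⁻¹(N)` and
`zo = π_{1-ε}⁻¹(N)` are characterized as the letters of maximal position. -/
def RightMove (π π' : RPair A) : Prop :=
  ∃ ε : Bool, ∃ zc zo : A,
    (∀ x : A, π ε x ≤ π ε zc) ∧
    (∀ x : A, π (!ε) x ≤ π (!ε) zo) ∧
    π' ε = π ε ∧
    (∀ b : A, π (!ε) b ≤ π (!ε) zc → π' (!ε) b = π (!ε) b) ∧
    ((π' (!ε) zo : ℕ) = (π (!ε) zc : ℕ) + 1) ∧
    (∀ b : A, ¬ π (!ε) b ≤ π (!ε) zc → b ≠ zo → (π' (!ε) b : ℕ) = (π (!ε) b : ℕ) + 1)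

/-- Type-ε left Rauzy induction sends `π` to `π'`.  Here `ac = π_ε⁻¹(1)` and
`ao = π_{1-ε}⁻¹(1)` are characterized as the letters of minimal position. -/
def LeftMove (π π' : RPair A) : Prop :=
  ∃ ε : Bool, ∃ ac ao : A,
    (∀ x : A, π ε ac ≤ π ε x) ∧
    (∀ x : A, π (!ε) ao ≤ π (!ε) x) ∧
    π' ε = π ε ∧
    (∀ b : A, π (!ε) ac ≤ π (!ε) b → π' (!ε) b = π (!ε) b) ∧
    ((π' (!ε) ao : ℕ) = (π (!ε) ac : ℕ) - 1) ∧
    (∀ b : A, ¬ π (!ε) ac ≤ π (!ε) b → b ≠ ao → (π' (!ε) b : ℕ) = (π (!ε) b : ℕ) - 1)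

/-- The Rauzy class `R(π)`: pairs reachable by right Rauzy inductions. -/
def RClass (π : RPair A) : Set (RPair A) := {ρ | Relation.ReflTransGen RightMove π ρ}

/-- The extended Rauzy class `E(π)`: pairs reachable by left and right Rauzy inductions. -/
def EClass (π : RPair A) : Set (RPair A) :=
  {ρ | Relation.ReflTransGen (fun x y => RightMove x y ∨ LeftMove x y) π ρ}

/-- `π ∘ ν = (π₀ ∘ ν, π₁ ∘ ν)`. -/
def pairRename (π : RPair A) (ν : Equiv.Perm A) : RPair A := fun ε => ν.trans (π ε)

/-- The renaming set `G(π) = {ν : π ∘ ν ∈ E(π)}`. -/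
def renamings (π : RPair A) : Set (Equiv.Perm A) := {ν | pairRename π ν ∈ EClass π}

/-- The non-labeled permutation `π₁ ∘ π₀⁻¹`. -/
def nonlabeled (π : RPair A) : Equiv.Perm (Fin (Fintype.card A)) :=
  (π false).symm.trans (π true)

/-- The position `1` (smallest). -/
def posFirst (A : Type*) [Fintype A] [Nonempty A] : Fin (Fintype.card A) :=
  ⟨0, Fintype.card_pos⟩

/-- The position `N` (largest). -/
def posLast (A : Type*) [Fintype A] [Nonempty A] : Fin (Fintype.card A) :=
  ⟨Fintype.card A - 1, Nat.sub_lt Fintype.card_pos Nat.one_pos⟩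

/-- A pair is standard if `π₀(π₁⁻¹(1)) = π₁(π₀⁻¹(1)) = N`. -/
def PairStandard [Nonempty A] (π : RPair A) : Prop :=
  π false ((π true).symm (posFirst A)) = posLast A ∧
  π true ((π false).symm (posFirst A)) = posLast A

/-- `S` is the permutation `S(π)` of the paper. -/
def IsS [Nonempty A] (π : RPair A) (S : Equiv.Perm A) : Prop :=
  ∀ b : A,
    (π true b = posFirst A → S b = (π false).symm (posFirst A)) ∧
    (π true b ≠ posFirst A →
      (((π true b : ℕ) = (π true ((π false).symm (posLast A)) : ℕ) + 1 →
        (π false (S b) : ℕ) = (π false ((π true).symm (posLast A)) : ℕ) + 1) ∧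
      ((π true b : ℕ) ≠ (π true ((π false).symm (posLast A)) : ℕ) + 1 →
        (π false (S b) : ℕ) =
          (π false ((π true).symm
            ⟨(π true b : ℕ) - 1,
              Nat.lt_of_le_of_lt (Nat.sub_le _ _) (π true b).isLt⟩) : ℕ) + 1)))

/-- The marked letter `X(π) = π₀⁻¹(1)`. -/
def XOf [Nonempty A] (π : RPair A) : A := (π false).symm (posFirst A)

/-- `Q` is the permutation `Q(π)` of the paper (constructed from `S = S(π)`). -/
def IsQ [Nonempty A] (π : RPair A) (S Q : Equiv.Perm A) : Prop :=
  Q (XOf π) = XOf π ∧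
  ∀ b : A, b ≠ XOf π →
    (S b = XOf π → Q b = S (S b)) ∧ (S b ≠ XOf π → Q b = S b)

/-- `Λ`: the multiset of cardinalities of the orbits of `Q` on `A ∖ {X}`
(for `Q` fixing `X`): the nontrivial cycle lengths of `Q` together with one `1`
for each fixed point of `Q` other than `X`. -/
def lamOf [DecidableEq A] (Q : Equiv.Perm A) : Multiset ℕ :=
  Q.cycleType + Multiset.replicate ((Finset.univ.filter fun a => Q a = a).card - 1) 1

/-- The centralizer `Z(π)` of `(X(π), Q(π))`. -/
def ZOf [Nonempty A] (π : RPair A) (Q : Equiv.Perm A) : Set (Equiv.Perm A) :=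
  {ν | ν (XOf π) = XOf π ∧ ν⁻¹ * Q * ν = Q}

def LRep {A : Type*} [Fintype A] [DecidableEq A] (p : A ≃ Fin (Fintype.card A)) (L : List A) : Prop :=
  L.Nodup ∧ (∀ x, x ∈ L) ∧ ∀ x, (p x : ℕ) = L.idxOf x

theorem LRep.of_map {A : Type*} [Fintype A] [DecidableEq A] {p : A ≃ Fin (Fintype.card A)} {L : List A}
    (h : L.map (fun x => (p x : ℕ)) = List.range (Fintype.card A)) : LRep p L := by
  have hnd : L.Nodup := by
    apply List.Nodup.of_map (fun x => (p x : ℕ))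
    rw [h]; exact List.nodup_range
  have hmem : ∀ x, x ∈ L := by
    intro x
    have : (p x : ℕ) ∈ L.map (fun x => (p x : ℕ)) := by
      rw [h]; exact List.mem_range.2 (p x).isLt
    obtain ⟨y, hy, hxy⟩ := List.mem_map.1 this
    have : y = x := p.injective (Fin.ext hxy)
    exact this ▸ hy
  refine ⟨hnd, hmem, fun x => ?_⟩
  have hlt : L.idxOf x < L.length := List.idxOf_lt_length_of_mem (hmem x)
  have h1 : (L.map (fun x => (p x : ℕ)))[L.idxOf x]'(by simpa using hlt) = p x := by
    simp
  rw [← h1]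
  simp [h]

theorem LRep.unique {A : Type*} [Fintype A] [DecidableEq A] {p q : A ≃ Fin (Fintype.card A)} {L : List A}
    (hp : LRep p L) (hq : LRep q L) : p = q := by
  ext x
  rw [hp.2.2, hq.2.2]

theorem LRep.len {A : Type*} [Fintype A] [DecidableEq A] {L : List A}
    (hnd : L.Nodup) (hmem : ∀ x, x ∈ L) : L.length = Fintype.card A := by
  rw [← List.toFinset_card_of_nodup hnd]
  have : L.toFinset = Finset.univ := by ext x; simp [hmem]
  rw [this, Finset.card_univ]

theorem exists_LRep {A : Type*} [Fintype A] [DecidableEq A] {L : List A}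
    (hnd : L.Nodup) (hmem : ∀ x, x ∈ L) : ∃ p : A ≃ Fin (Fintype.card A), LRep p L := by
  have hlen := LRep.len hnd hmem
  let F : A → Fin (Fintype.card A) := fun x =>
    ⟨L.idxOf x, by rw [← hlen]; exact List.idxOf_lt_length_of_mem (hmem x)⟩
  have hinj : Function.Injective F := by
    intro x y hxy
    have : L.idxOf x = L.idxOf y := congrArg Fin.val hxy
    exact (List.idxOf_inj (hmem x)).1 this
  have hb : Function.Bijective F :=
    (Fintype.bijective_iff_injective_and_card F).2 ⟨hinj, by simp⟩
  exact ⟨Equiv.ofBijective F hb, hnd, hmem, fun x => rfl⟩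

theorem LRep.le_last {A : Type*} [Fintype A] [DecidableEq A] {p : A ≃ Fin (Fintype.card A)} {B : List A} {w : A}
    (h : LRep p (B ++ [w])) (x : A) : p x ≤ p w := by
  obtain ⟨hnd, hmem, hi⟩ := h
  have hlen := LRep.len hnd hmem
  rw [Fin.le_def, hi w]
  have hw : w ∉ B := by
    intro hw
    rw [List.nodup_append] at hnd
    exact hnd.2.2 w hw w (by simp) rfl
  rw [List.idxOf_append_of_notMem hw]
  have := (p x).isLt
  simp at hlen ⊢
  omega

theorem step_one {A : Type*} [Fintype A] [DecidableEq A] (σ : RPair A) (ε : Bool)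
    (B P X : List A) (w y : A) (h1 : LRep (σ ε) (B ++ [w]))
    (h2 : LRep (σ (!ε)) (P ++ w :: (X ++ [y]))) :
    ∃ τ : RPair A, RightMove σ τ ∧ LRep (τ ε) (B ++ [w]) ∧
      LRep (τ (!ε)) (P ++ w :: y :: X) := by
  have hperm : (P ++ w :: (X ++ [y])).Perm (P ++ w :: y :: X) := by
    apply List.Perm.append_left
    apply List.Perm.cons
    exact List.perm_append_singleton y X
  have hnd' := hperm.nodup_iff.1 h2.1
  obtain ⟨q, hq⟩ := exists_LRep hnd' (fun x => hperm.mem_iff.1 (h2.2.1 x))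
  have e1 : (P ++ w :: (X ++ [y])) = (P ++ w :: X) ++ [y] := by simp
  have hl : ∀ x, σ (!ε) x ≤ σ (!ε) y := LRep.le_last (e1 ▸ h2)
  have hnd := h2.1
  have hP : w ∉ P ∧ y ∉ P ∧ w ≠ y ∧ w ∉ X ∧ y ∉ X ∧ ∀ x ∈ X, x ∉ P := by
    simp only [List.nodup_append, List.nodup_cons, List.mem_append, List.mem_cons] at hnd
    grind
  obtain ⟨hwP, hyP, hwy, hwX, hyX, hXP⟩ := hP
  have hw : (σ (!ε) w : ℕ) = P.length := by
    rw [h2.2.2, List.idxOf_append_of_notMem hwP]; simp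
  refine ⟨Function.update σ (!ε) q, ⟨ε, w, y, h1.le_last, hl, ?_, ?_, ?_, ?_⟩, ?_, ?_⟩
  · simp
  · intro x hx
    rw [Fin.le_def, hw, h2.2.2] at hx
    rw [Function.update_self]
    apply Fin.ext
    rw [hq.2.2, h2.2.2]
    rw [List.idxOf_append] at hx ⊢
    rw [List.idxOf_append]
    split_ifs at hx ⊢ with hxP
    · rfl
    · rw [List.idxOf_cons] at hx
      by_cases hwx : w = x
      · subst hwx; simp
      · have : (w == x) = false := by simpa using hwx
        rw [this] at hx
        simp at hx
  · rw [Function.update_self, hw, hq.2.2, List.idxOf_append_of_notMem hyP, List.idxOf_cons_ne _ hwy]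
    simp
  · intro x hx hxy
    rw [Function.update_self, hq.2.2, h2.2.2]
    rw [Fin.le_def, hw, h2.2.2] at hx
    have hxP : x ∉ P := by
      intro hxP
      rw [List.idxOf_append_of_mem hxP] at hx
      have := List.idxOf_lt_length_of_mem hxP
      omega
    have hxw : w ≠ x := by
      rintro rfl
      rw [List.idxOf_append_of_notMem hxP] at hx
      simp at hx
    have hxX : x ∈ X := by
      have := h2.2.1 x
      simp at this
      grind
    rw [List.idxOf_append_of_notMem hxP, List.idxOf_append_of_notMem hxP,
      List.idxOf_cons_ne _ hxw, List.idxOf_cons_ne _ hxw, List.idxOf_cons_ne _ (Ne.symm hxy),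
      List.idxOf_append_of_mem hxX]
    omega
  · simpa using h1
  · simpa using hq

theorem step_many {A : Type*} [Fintype A] [DecidableEq A] (ε : Bool)
    (B P : List A) (w : A) (Y : List A) : ∀ (X : List A) (σ : RPair A), LRep (σ ε) (B ++ [w]) →
    LRep (σ (!ε)) (P ++ w :: (X ++ Y)) →
    ∃ τ : RPair A, Relation.ReflTransGen RightMove σ τ ∧ LRep (τ ε) (B ++ [w]) ∧
      LRep (τ (!ε)) (P ++ w :: (Y ++ X)) := by
  induction Y using List.reverseRecOn with
  | nil => intro X σ h1 h2; exact ⟨σ, .refl, h1, by simpa using h2⟩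
  | append_singleton Y y ih =>
    intro X σ h1 h2
    obtain ⟨τ, hm, h3, h4⟩ := step_one σ ε B P (X ++ Y) w y h1 (by simpa using h2)
    obtain ⟨ρ, hm', h5, h6⟩ := ih (y :: X) τ h3 (by simpa using h4)
    exact ⟨ρ, .head hm hm', h5, by simpa using h6⟩

/-- winner is the last letter of the top row -/
theorem step_top {A : Type*} [Fintype A] [DecidableEq A] {ρ σ : RPair A} (B P : List A) (w : A)
    (X Y : List A) {L0 L1 : List A}
    (h : Relation.ReflTransGen RightMove ρ σ ∧ LRep (σ false) L0 ∧ LRep (σ true) L1)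
    (e0 : L0 = B ++ [w]) (e1 : L1 = P ++ w :: (X ++ Y)) :
    ∃ τ : RPair A, Relation.ReflTransGen RightMove ρ τ ∧ LRep (τ false) L0 ∧
      LRep (τ true) (P ++ w :: (Y ++ X)) := by
  subst e0 e1
  obtain ⟨τ, hm, h3, h4⟩ := step_many false B P w Y X σ h.2.1 h.2.2
  exact ⟨τ, h.1.trans hm, h3, h4⟩

theorem step_bot {A : Type*} [Fintype A] [DecidableEq A] {ρ σ : RPair A} (B P : List A) (w : A)
    (X Y : List A) {L0 L1 : List A}
    (h : Relation.ReflTransGen RightMove ρ σ ∧ LRep (σ false) L0 ∧ LRep (σ true) L1)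
    (e1 : L1 = B ++ [w]) (e0 : L0 = P ++ w :: (X ++ Y)) :
    ∃ τ : RPair A, Relation.ReflTransGen RightMove ρ τ ∧ LRep (τ false) (P ++ w :: (Y ++ X)) ∧
      LRep (τ true) L1 := by
  subst e0 e1
  obtain ⟨τ, hm, h3, h4⟩ := step_many true B P w Y X σ h.2.2 h.2.1
  exact ⟨τ, h.1.trans hm, h4, h3⟩

theorem big_step {A : Type*} [Fintype A] [DecidableEq A] {ρ σ : RPair A} (a b c d u g h f z : A)
    (Rt Rb T U : List A)
    (H : Relation.ReflTransGen RightMove ρ σ ∧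
      LRep (σ false) ([a, b, c, d, u, g, h] ++ Rt ++ [f] ++ U ++ [z]) ∧
      LRep (σ true) ([z, d, h, g] ++ Rb ++ [c, b, f, u] ++ T ++ [a])) :
    ∃ τ : RPair A, Relation.ReflTransGen RightMove ρ τ ∧
      LRep (τ false) ([a, b, c, d, h] ++ Rt ++ [f, u, g] ++ U ++ [z]) ∧
      LRep (τ true) ([z, d] ++ Rb ++ [c, b, f, h, g, u] ++ T ++ [a]) := by
  obtain ⟨σ1, H1⟩ := step_top ([a, b, c, d, u, g, h] ++ Rt ++ [f] ++ U) [] z [d, h, g]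
    (Rb ++ [c, b, f, u] ++ T ++ [a]) H (by simp) (by simp)
  obtain ⟨σ2, H2⟩ := step_bot ([z] ++ Rb ++ [c, b, f, u] ++ T ++ [a, d, h]) [a, b, c, d, u] g
    ([h] ++ Rt ++ [f]) (U ++ [z]) H1 (by simp) (by simp)
  obtain ⟨σ3, H3⟩ := step_top ([a, b, c, d, u, g] ++ U ++ [z, h] ++ Rt) ([z] ++ Rb ++ [c, b]) f
    ([u] ++ T ++ [a, d]) [h, g] H2 (by simp) (by simp)
  obtain ⟨σ4, H4⟩ := step_bot ([z] ++ Rb ++ [c, b, f, h, g, u] ++ T ++ [a]) [a, b, c] d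
    ([u, g] ++ U ++ [z]) ([h] ++ Rt ++ [f]) H3 (by simp) (by simp)
  obtain ⟨σ5, H5⟩ := step_top ([a, b, c, d, h] ++ Rt ++ [f, u, g] ++ U) [] z
    (Rb ++ [c, b, f, h, g, u] ++ T ++ [a]) [d] H4 (by simp) (by simp)
  exact ⟨σ5, H5.1, by simpa using H5.2.1, by simpa using H5.2.2⟩

/-- alternating block `x k, y k, x (k+1), y (k+1), …` with `m` pairs -/
def blkR {A : Type*} (x y : ℕ → A) : ℕ → ℕ → List A
  | _, 0 => []
  | k, m + 1 => x k :: y k :: blkR x y (k + 1) m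

def blku {A : Type*} (e : A) (h : ℕ → A) : ℕ → A
  | 0 => e
  | k + 1 => h k

def blkT {A : Type*} (e : A) (g h : ℕ → A) : ℕ → List A
  | 0 => []
  | k + 1 => g k :: blku e h k :: blkT e g h k

def blkU {A : Type*} (e : A) (g h : ℕ → A) : ℕ → List A
  | 0 => []
  | k + 1 => blku e h k :: g k :: blkU e g h k

theorem map_blkR {A : Type*} (x y : ℕ → A) (p : A → ℕ) (s : ℕ) (m : ℕ) : ∀ k,
    (∀ i, k ≤ i → i < k + m → p (x i) = s + 2 * i ∧ p (y i) = s + 2 * i + 1) →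
    (blkR x y k m).map p = List.range' (s + 2 * k) (2 * m) := by
  induction m with
  | zero => intro k _; rfl
  | succ m ih =>
    intro k hk
    have h0 := hk k le_rfl (by omega)
    have := ih (k + 1) (fun i h1 h2 => hk i (by omega) (by omega))
    rw [blkR, List.map_cons, List.map_cons, this, h0.1, h0.2,
      show 2 * (m + 1) = (2 * m) + 1 + 1 by ring, List.range'_succ, List.range'_succ]
    rfl

theorem chain {A : Type*} [Fintype A] [DecidableEq A] {ρ : RPair A} (n : ℕ) (a b c d e f z : A)
    (g h : ℕ → A)
    (h0 : LRep (ρ false) ([a, b, c, d, e] ++ blkR g h 0 n ++ [f] ++ [z]))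
    (h1 : LRep (ρ true) ([z, d] ++ blkR h g 0 n ++ [c, b, f, e] ++ [a])) :
    ∀ k m, k + m = n → ∃ τ : RPair A, Relation.ReflTransGen RightMove ρ τ ∧
      LRep (τ false) ([a, b, c, d, blku e h k] ++ blkR g h k m ++ [f] ++ blkU e g h k ++ [z]) ∧
      LRep (τ true) ([z, d] ++ blkR h g k m ++ [c, b, f, blku e h k] ++ blkT e g h k ++ [a]) := by
  intro k
  induction k with
  | zero =>
    intro m hm
    obtain rfl : m = n := by omega
    exact ⟨ρ, .refl, by simpa [blku, blkU] using h0, by simpa [blku, blkT] using h1⟩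
  | succ k ih =>
    intro m hm
    obtain ⟨σ, H, H0, H1⟩ := ih (m + 1) (by omega)
    obtain ⟨τ, K, K0, K1⟩ := big_step a b c d (blku e h k) (g k) (h k) f z (blkR g h (k+1) m)
      (blkR h g (k+1) m) (blkT e g h k) (blkU e g h k)
      ⟨H, by simpa [blkR] using H0, by simpa [blkR] using H1⟩
    exact ⟨τ, K, by simpa [blku, blkU] using K0, by simpa [blku, blkT] using K1⟩

theorem map_blkT {A : Type*} (e : A) (g h : ℕ → A) (p : A → ℕ) (n : ℕ)
    (he : p e = 2 * n + 5)
    (hg : ∀ i, i < n → p (g i) = 6 + 2 * (n - 1 - i))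
    (hh : ∀ i, i < n → p (h i) = 5 + 2 * (n - 1 - i)) : ∀ k, k ≤ n →
    (blku e h k :: blkT e g h k).map p = List.range' (5 + 2 * (n - k)) (2 * k + 1) := by
  intro k
  induction k with
  | zero => intro _; simp [blku, blkT, he]; omega
  | succ k ih =>
    intro hk
    have := ih (by omega)
    rw [blkT, List.map_cons, List.map_cons, this, blku, hg k (by omega), hh k (by omega),
      show 2 * (k + 1) + 1 = (2 * k + 1) + 1 + 1 by ring, List.range'_succ (n := 2 * k + 1 + 1),
      List.range'_succ (n := 2 * k + 1),
      show 5 + 2 * (n - (k + 1)) + 1 + 1 = 5 + 2 * (n - k) by omega,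
      show 5 + 2 * (n - (k + 1)) = 5 + 2 * (n - 1 - k) by omega,
      show 5 + 2 * (n - 1 - k) + 1 = 6 + 2 * (n - 1 - k) by omega]

theorem map_blkU {A : Type*} (e : A) (g h : ℕ → A) (p : A → ℕ) (n : ℕ)
    (he : p e = 2 * n + 4)
    (hg : ∀ i, i < n → p (g i) = 2 * (n - 1 - i) + 7)
    (hh : ∀ i, i < n → p (h i) = 2 * (n - 1 - i) + 4) : ∀ k, k ≤ n →
    (blkU e g h k).map p = List.range' (6 + 2 * (n - k)) (2 * k) := by
  intro k
  induction k with
  | zero => intro _; simp [blkU]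
  | succ k ih =>
    intro hk
    have := ih (by omega)
    have hu : p (blku e h k) = 6 + 2 * (n - (k + 1)) := by
      cases k with
      | zero => simp only [blku, he]; omega
      | succ j => simp only [blku]; rw [hh j (by omega)]; omega
    rw [blkU, List.map_cons, List.map_cons, this, hu, hg k (by omega),
      show 2 * (k + 1) = (2 * k) + 1 + 1 by ring, List.range'_succ (n := 2 * k + 1),
      List.range'_succ (n := 2 * k),
      show 6 + 2 * (n - (k + 1 )) + 1 + 1 = 6 + 2 * (n - k) by omega,
      show 6 + 2 * (n - (k + 1)) + 1 = 2 * (n - 1 - k) + 7 by omega]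


/-- for `A = {a,b,c,d,e,f,g₁,…,g_n,h₁,…,h_n,z}` (2n+7 distinct
letters), `π̃₀ : a b c d e g₁ h₁ … g_n h_n f z`,
`π̃₁ : z d h₁ g₁ … h_n g_n c b f e a` is irreducible, and the pair
`π₀ : a b c d h_n f h_{n−1} g_n … h₁ g₂ e g₁ z`,
`π₁ : z d c b f h_n g_n h_{n−1} g_{n−1} … g₂ h₁ g₁ e a` is in its Rauzy class.
(Positions 0-indexed; `g j` denotes `g_{j+1}`.) -/
theorem stmt18 {A : Type*} [Fintype A] [DecidableEq A] [Nonempty A]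
    (n : ℕ) (hn : 1 ≤ n) (a b c d e f z : A) (g h : Fin n → A)
    (hcard : Fintype.card A = 2 * n + 7)
    (pt π : RPair A)
    -- π̃₀ lists a, b, c, d, e, g₁, h₁, …, g_n, h_n, f, z
    (ht0a : (pt false a : ℕ) = 0) (ht0b : (pt false b : ℕ) = 1)
    (ht0c : (pt false c : ℕ) = 2) (ht0d : (pt false d : ℕ) = 3)
    (ht0e : (pt false e : ℕ) = 4)
    (ht0g : ∀ j : Fin n, (pt false (g j) : ℕ) = 5 + 2 * (j : ℕ))
    (ht0h : ∀ j : Fin n, (pt false (h j) : ℕ) = 6 + 2 * (j : ℕ))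
    (ht0f : (pt false f : ℕ) = 2 * n + 5) (ht0z : (pt false z : ℕ) = 2 * n + 6)
    -- π̃₁ lists z, d, h₁, g₁, …, h_n, g_n, c, b, f, e, a
    (ht1z : (pt true z : ℕ) = 0) (ht1d : (pt true d : ℕ) = 1)
    (ht1h : ∀ j : Fin n, (pt true (h j) : ℕ) = 2 + 2 * (j : ℕ))
    (ht1g : ∀ j : Fin n, (pt true (g j) : ℕ) = 3 + 2 * (j : ℕ))
    (ht1c : (pt true c : ℕ) = 2 * n + 2) (ht1b : (pt true b : ℕ) = 2 * n + 3)
    (ht1f : (pt true f : ℕ) = 2 * n + 4) (ht1e : (pt true e : ℕ) = 2 * n + 5)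
    (ht1a : (pt true a : ℕ) = 2 * n + 6)
    -- π₀ lists a, b, c, d, h_n, f, h_{n−1}, g_n, …, h₁, g₂, e, g₁, z
    (h0a : (π false a : ℕ) = 0) (h0b : (π false b : ℕ) = 1)
    (h0c : (π false c : ℕ) = 2) (h0d : (π false d : ℕ) = 3)
    (h0h : ∀ j : Fin n, (π false (h j) : ℕ) = 2 * (n - 1 - (j : ℕ)) + 4)
    (h0f : (π false f : ℕ) = 5)
    (h0g : ∀ j : Fin n, (π false (g j) : ℕ) = 2 * (n - 1 - (j : ℕ)) + 7)
    (h0e : (π false e : ℕ) = 2 * n + 4) (h0z : (π false z : ℕ) = 2 * n + 6)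
    -- π₁ lists z, d, c, b, f, h_n, g_n, h_{n−1}, g_{n−1}, …, g₂, h₁, g₁, e, a
    (h1z : (π true z : ℕ) = 0) (h1d : (π true d : ℕ) = 1)
    (h1c : (π true c : ℕ) = 2) (h1b : (π true b : ℕ) = 3)
    (h1f : (π true f : ℕ) = 4)
    (h1h : ∀ j : Fin n, (π true (h j) : ℕ) = 5 + 2 * (n - 1 - (j : ℕ)))
    (h1g : ∀ j : Fin n, (π true (g j) : ℕ) = 6 + 2 * (n - 1 - (j : ℕ)))
    (h1e : (π true e : ℕ) = 2 * n + 5) (h1a : (π true a : ℕ) = 2 * n + 6) :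
    PairIrreducible pt ∧ π ∈ RClass pt := by
  let g' : ℕ → A := fun i => if hi : i < n then g ⟨i, hi⟩ else a
  let h' : ℕ → A := fun i => if hi : i < n then h ⟨i, hi⟩ else a
  have g'e : ∀ i (hi : i < n), g' i = g ⟨i, hi⟩ := fun i hi => by simp [g', hi]
  have h'e : ∀ i (hi : i < n), h' i = h ⟨i, hi⟩ := fun i hi => by simp [h', hi]
  clear_value g' h'
  constructor
  · intro k hk
    have := hk a (by rw [Fin.le_def]; omega)
    rw [Fin.le_def] at this
    have := k.isLt
    omega
  · have A0 : LRep (pt false) ([a, b, c, d, e] ++ blkR g' h' 0 n ++ [f] ++ [z]) := by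
      apply LRep.of_map
      have := map_blkR g' h' (fun x => (pt false x : ℕ)) 5 n 0 (by
        intro i _ hi
        have e1 := ht0g ⟨i, by omega⟩
        have e2 := ht0h ⟨i, by omega⟩
        simp only at e1 e2
        rw [g'e i (by omega), h'e i (by omega)]
        exact ⟨by beta_reduce; omega, by beta_reduce; omega⟩)
      simp only [List.map_append, this, List.map_cons, List.map_nil, ht0a, ht0b, ht0c, ht0d, ht0e,
        ht0f, ht0z, hcard]
      apply List.ext_getElem
      · simp <;> omega
      · intro i h1 h2
        simp at h1
        simp [List.getElem_append, List.getElem_cons]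
        grind
    have A1 : LRep (pt true) ([z, d] ++ blkR h' g' 0 n ++ [c, b, f, e] ++ [a]) := by
      apply LRep.of_map
      have := map_blkR h' g' (fun x => (pt true x : ℕ)) 2 n 0 (by
        intro i _ hi
        have e1 := ht1g ⟨i, by omega⟩
        have e2 := ht1h ⟨i, by omega⟩
        simp only at e1 e2
        rw [g'e i (by omega), h'e i (by omega)]
        exact ⟨by beta_reduce; omega, by beta_reduce; omega⟩)
      simp only [List.map_append, this, List.map_cons, List.map_nil, ht1a, ht1b, ht1c, ht1d, ht1e,
        ht1f, ht1z, hcard]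
      apply List.ext_getElem
      · simp <;> omega
      · intro i h1 h2
        simp at h1
        simp [List.getElem_append, List.getElem_cons]
        grind
    obtain ⟨τ, H, H0, H1⟩ := chain n a b c d e f z g' h' A0 A1 n 0 rfl
    have B0 : LRep (π false) ([a, b, c, d, blku e h' n] ++ blkR g' h' n 0 ++ [f] ++ blkU e g' h' n ++ [z]) := by
      apply LRep.of_map
      have := map_blkU e g' h' (fun x => (π false x : ℕ)) n h0e
        (fun i hi => by simp only [g'e i hi, h0g]) (fun i hi => by simp only [h'e i hi, h0h]) n le_rfl
      have hu : (π false (blku e h' n) : ℕ) = 4 := by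
        obtain ⟨j, rfl⟩ : ∃ j, n = j + 1 := ⟨n - 1, by omega⟩
        simp only [blku, h'e j (by omega), h0h]
        omega
      simp only [List.map_append, this, List.map_cons, List.map_nil, h0a, h0b, h0c, h0d, hu, blkR,
        h0f, h0z, hcard]
      apply List.ext_getElem
      · simp <;> omega
      · intro i h1 h2
        simp at h1
        simp [List.getElem_append, List.getElem_cons]
        grind
    have B1 : LRep (π true) ([z, d] ++ blkR h' g' n 0 ++ [c, b, f, blku e h' n] ++ blkT e g' h' n ++ [a]) := by
      apply LRep.of_map
      have := map_blkT e g' h' (fun x => (π true x : ℕ)) n h1e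
        (fun i hi => by simp only [g'e i hi, h1g]) (fun i hi => by simp only [h'e i hi, h1h]) n le_rfl
      have e1 : [z, d] ++ blkR h' g' n 0 ++ [c, b, f, blku e h' n] ++ blkT e g' h' n ++ [a]
        = [z, d, c, b, f] ++ (blku e h' n :: blkT e g' h' n) ++ [a] := by simp [blkR]
      rw [e1]
      rw [List.map_append, List.map_append, this]
      simp only [List.map_cons, List.map_nil, h1a, h1b, h1c, h1d, h1f, h1z, hcard]
      apply List.ext_getElem
      · simp <;> omega
      · intro i h1 h2
        simp at h1
        simp [List.getElem_append, List.getElem_cons]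
        grind
    have : τ = π := by
      funext ε
      cases ε
      · exact H0.unique B0
      · exact H1.unique B1
    exact this ▸ H
end

section
/- Let n ≥ 1 and let A = {a, b, c, d, e₁,…,e_n, f₁,…,f_n, z} consist of 2n+5 distinct letters. Let π̃ be the pair on A with π̃₀ listing A in the order a, b, c, e₁, f₁, e₂, f₂, …, e_n, f_n, d, z and π̃₁ listing A in the order z, f₁, e₁, f₂, e₂, …, f_n, e_n, d, c, b, a. Then π̃ is irreducible, and the pair π with π₀ listing A in the order a, f_n, d, f_{n−1}, e_n, f_{n−2}, e_{n−1}, …, f₁, e₂, b, c, e₁, z and π₁ listing A in the order z, d, f_n, e_n, f_{n−1}, e_{n−1}, …, e₂, f₁, e₁, c, b, a belongs to the Rauzy class R(π̃). -/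
open Equiv

variable {A : Type*} [Fintype A]

namespace S19

variable {B : Type*} [Fintype B]

def lst (g : B ≃ Fin (Fintype.card B)) : List B := List.ofFn g.symm

def LF (g : B ≃ Fin (Fintype.card B)) : ℕ → List B → Prop
  | _, [] => True
  | s, x :: l => (g x : ℕ) = s ∧ LF g (s + 1) l

theorem LF_append (g : B ≃ Fin (Fintype.card B)) (l l' : List B) : ∀ s,
    LF g s (l ++ l') ↔ LF g s l ∧ LF g (s + l.length) l' := by
  induction l with
  | nil => intro s; simp [LF]
  | cons x l ih =>
    intro s
    simp only [List.cons_append, LF, ih, List.length_cons, and_assoc]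
    rw [show s + 1 + l.length = s + (l.length + 1) by omega]

theorem LF_get (g : B ≃ Fin (Fintype.card B)) (l : List B) : ∀ s, LF g s l →
    ∀ i (h : i < l.length), (g l[i] : ℕ) = s + i := by
  induction l with
  | nil => intro s _ i h; simp at h
  | cons x l ih =>
    intro s hs i h
    cases i with
    | zero => simpa using hs.1
    | succ i =>
      have := ih (s + 1) hs.2 i (by simpa using h)
      simp only [List.getElem_cons_succ, this]; omega

theorem lst_length (g : B ≃ Fin (Fintype.card B)) : (lst g).length = Fintype.card B := by
  simp [lst]

theorem mem_lst (g : B ≃ Fin (Fintype.card B)) (x : B) : x ∈ lst g := by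
  rw [lst, List.mem_ofFn]; exact ⟨g x, by simp⟩

theorem lst_nodup (g : B ≃ Fin (Fintype.card B)) : (lst g).Nodup := by
  rw [lst, List.nodup_ofFn]; exact g.symm.injective

theorem lst_inj (g g' : B ≃ Fin (Fintype.card B)) (h : lst g = lst g') : g = g' := by
  have := List.ofFn_injective h
  have h2 : g.symm = g'.symm := Equiv.coe_fn_injective this
  simpa using congrArg Equiv.symm h2

theorem lst_eq (g : B ≃ Fin (Fintype.card B)) (l : List B) (hl : l.length = Fintype.card B)
    (h : LF g 0 l) : lst g = l := by
  apply List.ext_getElem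
  · rw [lst_length, hl]
  · intro i h1 h2
    simp only [lst, List.getElem_ofFn]
    rw [Equiv.symm_apply_eq]
    apply Fin.ext
    rw [LF_get g l 0 h i h2]; simp

theorem lst_pos (g : B ≃ Fin (Fintype.card B)) (X Y : List B) (x : B)
    (h : lst g = X ++ x :: Y) : (g x : ℕ) = X.length := by
  have hlt : X.length < (lst g).length := by rw [h]; simp
  have h1 : (lst g)[X.length] = x := by simp [h]
  simp only [lst, List.getElem_ofFn] at h1
  rw [← h1]; simp

theorem exists_lst (g : B ≃ Fin (Fintype.card B)) (l : List B) (h : l.Perm (lst g)) :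
    ∃ g' : B ≃ Fin (Fintype.card B), lst g' = l := by
  have hn : l.Nodup := h.nodup_iff.2 (lst_nodup g)
  have hl : l.length = Fintype.card B := by rw [h.length_eq, lst_length]
  have hb : Function.Bijective (fun i : Fin (Fintype.card B) => l[(i : ℕ)]'(by rw [hl]; exact i.2)) := by
    rw [Fintype.bijective_iff_injective_and_card]
    refine ⟨?_, by simp⟩
    intro i j hij
    exact Fin.ext ((List.Nodup.getElem_inj_iff hn).1 hij)
  refine ⟨(Equiv.ofBijective _ hb).symm, ?_⟩
  apply List.ext_getElem
  · rw [lst_length, hl]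
  · intro i h1 h2
    simp [lst]

theorem lst_last (g : B ≃ Fin (Fintype.card B)) (T : List B) (w : B)
    (h : lst g = T ++ [w]) (x : B) : g x ≤ g w := by
  have h1 := lst_pos g T [] w h
  have h2 := lst_length g
  rw [h] at h2
  simp at h2
  have := (g x).2
  rw [Fin.le_def]; omega

theorem single (π : RPair B) (ε : Bool) (T X Y : List B) (w v : B)
    (h0 : lst (π ε) = T ++ [w]) (h1 : lst (π (!ε)) = X ++ w :: (Y ++ [v])) :
    ∃ π' : RPair B, RightMove π π' ∧ π' ε = π ε ∧ lst (π' (!ε)) = X ++ w :: (v :: Y) := by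
  obtain ⟨g', hg'⟩ := exists_lst (π (!ε)) (X ++ w :: (v :: Y)) (by
    rw [h1]
    refine List.Perm.append_left X (List.Perm.cons w ?_)
    exact (List.perm_append_singleton v Y).symm)
  refine ⟨fun δ => if δ = ε then π ε else g', ?_, by simp, by simp [hg']⟩
  have pw := lst_pos _ _ _ _ h1
  have pv := lst_pos (π (!ε)) (X ++ w :: Y) [] v (by simp [h1])
  have pw' := lst_pos _ _ _ _ hg'
  have pv' := lst_pos g' (X ++ [w]) Y v (by simp [hg'])
  refine ⟨ε, w, v, lst_last _ _ _ h0, lst_last _ (X ++ w :: Y) _ (by simp [h1]), by simp, ?_, ?_, ?_⟩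
  · intro b hb
    rw [Fin.le_def] at hb
    simp only [Bool.not_eq_self, if_false]
    have hm := mem_lst (π (!ε)) b
    rw [h1] at hm
    simp only [List.mem_append, List.mem_cons, List.mem_singleton, List.not_mem_nil, or_false] at hm
    apply Fin.ext
    rcases hm with hm | rfl | hm | rfl
    · obtain ⟨X1, X2, rfl⟩ := List.append_of_mem hm
      rw [lst_pos g' X1 (X2 ++ w :: v :: Y) b (by simp [hg']),
        lst_pos (π (!ε)) X1 (X2 ++ w :: (Y ++ [v])) b (by simp [h1])]
    · omega
    · obtain ⟨Y1, Y2, rfl⟩ := List.append_of_mem hm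
      have := lst_pos (π (!ε)) (X ++ w :: Y1) (Y2 ++ [v]) b (by simp [h1])
      simp at this; omega
    · simp at pv; omega
  · simp only [Bool.not_eq_self, if_false]
    rw [pv', pw]; simp
  · intro b hb hbv
    rw [Fin.le_def] at hb
    simp only [Bool.not_eq_self, if_false]
    have hm := mem_lst (π (!ε)) b
    rw [h1] at hm
    simp only [List.mem_append, List.mem_cons, List.mem_singleton, List.not_mem_nil, or_false] at hm
    rcases hm with hm | rfl | hm | rfl
    · obtain ⟨X1, X2, rfl⟩ := List.append_of_mem hm
      have := lst_pos (π (!ε)) X1 (X2 ++ w :: (Y ++ [v])) b (by simp [h1])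
      simp at pw; omega
    · omega
    · obtain ⟨Y1, Y2, rfl⟩ := List.append_of_mem hm
      rw [lst_pos (π (!ε)) (X ++ w :: Y1) (Y2 ++ [v]) b (by simp [h1]),
        lst_pos g' (X ++ w :: v :: Y1) Y2 b (by simp [hg'])]
      simp; omega
    · exact absurd rfl hbv

theorem rot (ε : Bool) (T X : List B) (w : B) (Z : List B) : ∀ (Y : List B) (π : RPair B),
    lst (π ε) = T ++ [w] → lst (π (!ε)) = X ++ w :: (Y ++ Z) →
    ∃ π' : RPair B, Relation.ReflTransGen RightMove π π' ∧ π' ε = π ε ∧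
      lst (π' (!ε)) = X ++ w :: (Z ++ Y) := by
  induction Z using List.reverseRecOn with
  | nil => intro Y π h0 h1; exact ⟨π, .refl, rfl, by simpa using h1⟩
  | append_singleton Z v ih =>
    intro Y π h0 h1
    obtain ⟨π1, m1, e1, l1⟩ := single π ε T X (Y ++ Z) w v h0 (by simp [h1])
    obtain ⟨π2, m2, e2, l2⟩ := ih (v :: Y) π1 (by rw [e1, h0]) (by simp [l1])
    exact ⟨π2, .head m1 m2, by rw [e2, e1], by simp [l2]⟩

/-- Reachability for pairs given by their two lists. -/
def RR (t b t' b' : List B) : Prop :=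
  ∀ π : RPair B, lst (π false) = t → lst (π true) = b →
    ∃ π' : RPair B, Relation.ReflTransGen RightMove π π' ∧ lst (π' false) = t' ∧ lst (π' true) = b'

theorem RR.trans {t b t' b' t'' b'' : List B} (h : RR t b t' b') (h' : RR t' b' t'' b'') :
    RR t b t'' b'' := by
  intro π h0 h1
  obtain ⟨π1, m1, x1, y1⟩ := h π h0 h1
  obtain ⟨π2, m2, x2, y2⟩ := h' π1 x1 y1
  exact ⟨π2, m1.trans m2, x2, y2⟩

/-- winner on top, bottom is rotated -/
theorem rotBot {t b b' : List B} (T X Y Z : List B) (w : B) (ht : t = T ++ [w])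
    (hb : b = X ++ w :: (Y ++ Z)) (hb' : b' = X ++ w :: (Z ++ Y)) : RR t b t b' := by
  intro π h0 h1
  obtain ⟨π1, m1, x1, y1⟩ := rot false T X w Z Y π (by rw [h0, ht]) (by simp [h1, hb])
  exact ⟨π1, m1, by rw [x1, h0], by rw [hb']; exact y1⟩

theorem rotTop {t b t' : List B} (T X Y Z : List B) (w : B) (hb : b = T ++ [w])
    (ht : t = X ++ w :: (Y ++ Z)) (ht' : t' = X ++ w :: (Z ++ Y)) : RR t b t' b := by
  intro π h0 h1
  obtain ⟨π1, m1, x1, y1⟩ := rot true T X w Z Y π (by rw [h1, hb]) (by simp [h0, ht])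
  exact ⟨π1, m1, by rw [ht']; exact y1, by rw [x1, h1]⟩

def Q (E F : ℕ → B) : ℕ → List B
  | 0 => []
  | k + 1 => Q E F k ++ [E k, F k]

def R (E F : ℕ → B) : ℕ → List B
  | 0 => []
  | k + 1 => R E F k ++ [F k, E k]

def P (E F : ℕ → B) : ℕ → ℕ → List B
  | 0, _ => []
  | m + 1, k => P E F m (k + 1) ++ [F k, E (k + 1)]

def S (E F : ℕ → B) : ℕ → ℕ → List B
  | 0, _ => []
  | m + 1, k => S E F m (k + 1) ++ [F k, E k]

theorem S_last (E F : ℕ → B) (m k : ℕ) : ∃ U, E (k + m) :: S E F m k = U ++ [E k] := by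
  cases m with
  | zero => exact ⟨[], by simp [S]⟩
  | succ m => exact ⟨E (k + (m + 1)) :: S E F m (k + 1) ++ [F k], by simp [S]⟩

/-- the middle part of the path -/
theorem mid (E F : ℕ → B) (a b c z : B) : ∀ k m : ℕ,
    RR (a :: P E F (m + 1) k ++ [z, b, c] ++ Q E F k ++ [E k])
      (z :: R E F (k + 1) ++ [c, b, a] ++ E (k + 1 + m) :: S E F m (k + 1))
      (a :: P E F (k + m + 1) 0 ++ [z, b, c] ++ [E 0])
      (z :: R E F 1 ++ [c, b, a] ++ E (k + 1 + m) :: S E F (k + m) 1) := by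
  intro k
  induction k with
  | zero =>
    intro m π h0 h1
    exact ⟨π, .refl, by simpa [Q] using h0, by simpa using h1⟩
  | succ k ih =>
    intro m
    obtain ⟨U, hU⟩ := S_last E F m (k + 2)
    have ih' := ih (m + 1)
    rw [show k + 1 + (m + 1) = k + 1 + 1 + m by omega,
      show k + (m + 1) + 1 = k + 1 + m + 1 by omega, show k + (m + 1) = k + 1 + m by omega] at ih'
    refine RR.trans (t' := a :: P E F (m + 2) k ++ [z, b, c] ++ Q E F k ++ [E k])
      (b' := z :: R E F (k + 1 + 1) ++ [c, b, a] ++ E (k + 1 + 1 + m) :: S E F m (k + 1 + 1))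
      ?_ (RR.trans ?_ ih')
    · apply rotTop (z :: R E F (k + 1 + 1) ++ [c, b, a] ++ U)
        (a :: P E F m (k + 2) ++ [F (k + 1)]) (z :: b :: c :: Q E F k ++ [E k])
        [F k, E (k + 1)] (E (k + 2))
      · rw [hU]; simp
      · simp [P, Q]
      · simp [P]
    · apply rotBot (a :: P E F (m + 2) k ++ [z, b, c] ++ Q E F k)
        (z :: R E F k ++ [F k]) [F (k + 1), E (k + 1)]
        ([c, b, a] ++ E (k + 1 + 1 + m) :: S E F m (k + 1 + 1)) (E k)
      · simp
      · simp [R]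
      · simp [R, S]

theorem full (E F : ℕ → B) (a b c z : B) (k : ℕ) :
    RR (a :: b :: c :: Q E F (k + 1) ++ [E (k + 1), z])
      (z :: R E F (k + 1) ++ [E (k + 1), c, b, a])
      (a :: P E F (k + 1) 0 ++ [b, c, E 0, z])
      (z :: E (k + 1) :: S E F (k + 1) 0 ++ [c, b, a]) := by
  have hm := mid E F a b c z k 0
  obtain ⟨U, hU⟩ := S_last E F k 1
  rw [show 1 + k = k + 1 by omega] at hU
  simp only [Nat.add_zero, Nat.zero_add] at hm
  refine RR.trans (t' := a :: P E F 1 k ++ [z, b, c] ++ Q E F k ++ [E k])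
    (b' := z :: R E F (k + 1) ++ [E (k + 1), c, b, a]) ?_ (RR.trans ?_ (RR.trans hm (RR.trans
    (t' := a :: P E F (k + 1) 0 ++ [b, c, E 0, z])
    (b' := z :: R E F 1 ++ [c, b, a] ++ E (k + 1) :: S E F k 1) ?_ ?_)))
  · apply rotTop (z :: R E F (k + 1) ++ [E (k + 1), c, b]) []
      (b :: c :: Q E F k ++ [E k]) [F k, E (k + 1), z] a
    · simp
    · simp [Q]
    · simp [P]
  · apply rotBot (a :: P E F 1 k ++ [z, b, c] ++ Q E F k) (z :: R E F k ++ [F k])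
      [E (k + 1)] [c, b, a] (E k)
    · simp
    · simp [R]
    · simp [R, S]
  · apply rotTop (z :: R E F 1 ++ [c, b, a] ++ U) (a :: P E F k 1 ++ [F 0]) [z] [b, c, E 0] (E 1)
    · rw [hU]; simp
    · simp [P]
    · simp [P]
  · apply rotBot (a :: P E F (k + 1) 0 ++ [b, c, E 0]) [] (R E F 1 ++ [c, b, a])
      (E (k + 1) :: S E F k 1) z
    · simp
    · simp
    · simp [R, S]

theorem Q_len (E F : ℕ → B) (k : ℕ) : (Q E F k).length = 2 * k := by
  induction k with
  | zero => rfl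
  | succ k ih => simp [Q, ih]; omega

theorem R_len (E F : ℕ → B) (k : ℕ) : (R E F k).length = 2 * k := by
  induction k with
  | zero => rfl
  | succ k ih => simp [R, ih]; omega

theorem P_len (E F : ℕ → B) (m : ℕ) : ∀ k, (P E F m k).length = 2 * m := by
  induction m with
  | zero => intro k; rfl
  | succ m ih => intro k; simp [P, ih]; omega

theorem S_len (E F : ℕ → B) (m : ℕ) : ∀ k, (S E F m k).length = 2 * m := by
  induction m with
  | zero => intro k; rfl
  | succ m ih => intro k; simp [S, ih]; omega

theorem Q_LF (E F : ℕ → B) (g : B ≃ Fin (Fintype.card B)) (s k : ℕ)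
    (hE : ∀ i < k, (g (E i) : ℕ) = s + 2 * i) (hF : ∀ i < k, (g (F i) : ℕ) = s + 1 + 2 * i) :
    LF g s (Q E F k) := by
  induction k with
  | zero => trivial
  | succ k ih =>
    rw [Q, LF_append, Q_len]
    refine ⟨ih (fun i hi => hE i (by omega)) (fun i hi => hF i (by omega)), hE k (by omega), ?_, trivial⟩
    rw [hF k (by omega)]; omega

theorem R_LF (E F : ℕ → B) (g : B ≃ Fin (Fintype.card B)) (s k : ℕ)
    (hF : ∀ i < k, (g (F i) : ℕ) = s + 2 * i) (hE : ∀ i < k, (g (E i) : ℕ) = s + 1 + 2 * i) :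
    LF g s (R E F k) := by
  induction k with
  | zero => trivial
  | succ k ih =>
    rw [R, LF_append, R_len]
    refine ⟨ih (fun i hi => hF i (by omega)) (fun i hi => hE i (by omega)), hF k (by omega), ?_, trivial⟩
    rw [hE k (by omega)]; omega

theorem P_LF (E F : ℕ → B) (g : B ≃ Fin (Fintype.card B)) (s m : ℕ) : ∀ k,
    (∀ i < m, (g (F (k + i)) : ℕ) = s + 2 * (m - 1 - i)) →
    (∀ i < m, (g (E (k + i + 1)) : ℕ) = s + 1 + 2 * (m - 1 - i)) →
    LF g s (P E F m k) := by
  induction m with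
  | zero => intros; trivial
  | succ m ih =>
    intro k hF hE
    rw [P, LF_append, P_len]
    refine ⟨ih (k + 1) (fun i hi => ?_) (fun i hi => ?_), ?_, ?_, trivial⟩
    · rw [show k + 1 + i = k + (i + 1) by omega, hF (i + 1) (by omega)]; omega
    · rw [show k + 1 + i = k + (i + 1) by omega, hE (i + 1) (by omega)]; omega
    · have := hF 0 (by omega); simpa using this
    · have := hE 0 (by omega); simp at this; omega

theorem S_LF (E F : ℕ → B) (g : B ≃ Fin (Fintype.card B)) (s m : ℕ) : ∀ k,
    (∀ i < m, (g (F (k + i)) : ℕ) = s + 2 * (m - 1 - i)) →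
    (∀ i < m, (g (E (k + i)) : ℕ) = s + 1 + 2 * (m - 1 - i)) →
    LF g s (S E F m k) := by
  induction m with
  | zero => intros; trivial
  | succ m ih =>
    intro k hF hE
    rw [S, LF_append, S_len]
    refine ⟨ih (k + 1) (fun i hi => ?_) (fun i hi => ?_), ?_, ?_, trivial⟩
    · rw [show k + 1 + i = k + (i + 1) by omega, hF (i + 1) (by omega)]; omega
    · rw [show k + 1 + i = k + (i + 1) by omega, hE (i + 1) (by omega)]; omega
    · have := hF 0 (by omega); simpa using this
    · have := hE 0 (by omega); simp at this; omega

end S19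

/-- for `A = {a,b,c,d,e₁,…,e_n,f₁,…,f_n,z}` (2n+5 distinct letters),
`π̃₀ : a b c e₁ f₁ … e_n f_n d z`, `π̃₁ : z f₁ e₁ … f_n e_n d c b a` is irreducible,
and the pair `π₀ : a f_n d f_{n−1} e_n … f₁ e₂ b c e₁ z`,
`π₁ : z d f_n e_n f_{n−1} e_{n−1} … e₂ f₁ e₁ c b a` is in its Rauzy class.
(Positions 0-indexed; `e i` denotes `e_{i+1}`.) -/
theorem stmt19 {A : Type*} [Fintype A] [DecidableEq A] [Nonempty A]
    (n : ℕ) (hn : 1 ≤ n) (a b c d z : A) (e f : Fin n → A)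
    (hcard : Fintype.card A = 2 * n + 5)
    (pt π : RPair A)
    -- π̃₀ lists a, b, c, e₁, f₁, …, e_n, f_n, d, z
    (ht0a : (pt false a : ℕ) = 0) (ht0b : (pt false b : ℕ) = 1)
    (ht0c : (pt false c : ℕ) = 2)
    (ht0e : ∀ i : Fin n, (pt false (e i) : ℕ) = 3 + 2 * (i : ℕ))
    (ht0f : ∀ i : Fin n, (pt false (f i) : ℕ) = 4 + 2 * (i : ℕ))
    (ht0d : (pt false d : ℕ) = 2 * n + 3) (ht0z : (pt false z : ℕ) = 2 * n + 4)
    -- π̃₁ lists z, f₁, e₁, f₂, e₂, …, f_n, e_n, d, c, b, a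
    (ht1z : (pt true z : ℕ) = 0)
    (ht1f : ∀ i : Fin n, (pt true (f i) : ℕ) = 1 + 2 * (i : ℕ))
    (ht1e : ∀ i : Fin n, (pt true (e i) : ℕ) = 2 + 2 * (i : ℕ))
    (ht1d : (pt true d : ℕ) = 2 * n + 1) (ht1c : (pt true c : ℕ) = 2 * n + 2)
    (ht1b : (pt true b : ℕ) = 2 * n + 3) (ht1a : (pt true a : ℕ) = 2 * n + 4)
    -- π₀ lists a, f_n, d, f_{n−1}, e_n, …, f₁, e₂, b, c, e₁, z
    (h0a : (π false a : ℕ) = 0)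
    (h0f : ∀ i : Fin n, (π false (f i) : ℕ) = 2 * (n - 1 - (i : ℕ)) + 1)
    (h0d : (π false d : ℕ) = 2)
    (h0e : ∀ i : Fin n, (π false (e i) : ℕ) =
      if (i : ℕ) = 0 then 2 * n + 3 else 2 * (n - 1 - (i : ℕ)) + 4)
    (h0b : (π false b : ℕ) = 2 * n + 1) (h0c : (π false c : ℕ) = 2 * n + 2)
    (h0z : (π false z : ℕ) = 2 * n + 4)
    -- π₁ lists z, d, f_n, e_n, f_{n−1}, e_{n−1}, …, e₂, f₁, e₁, c, b, a
    (h1z : (π true z : ℕ) = 0) (h1d : (π true d : ℕ) = 1)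
    (h1f : ∀ i : Fin n, (π true (f i) : ℕ) = 2 + 2 * (n - 1 - (i : ℕ)))
    (h1e : ∀ i : Fin n, (π true (e i) : ℕ) = 3 + 2 * (n - 1 - (i : ℕ)))
    (h1c : (π true c : ℕ) = 2 * n + 2) (h1b : (π true b : ℕ) = 2 * n + 3)
    (h1a : (π true a : ℕ) = 2 * n + 4) :
    PairIrreducible pt ∧ π ∈ RClass pt := by
  refine ⟨?_, ?_⟩
  · intro k hk
    have h := hk a (by rw [Fin.le_def]; omega)
    rw [Fin.le_def] at h
    have := k.2
    omega
  obtain ⟨k, rfl⟩ : ∃ k, n = k + 1 := ⟨n - 1, by omega⟩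
  obtain ⟨E, hE, hEn⟩ : ∃ E : ℕ → A, (∀ i (h : i < k + 1), E i = e ⟨i, h⟩) ∧ E (k + 1) = d :=
    ⟨fun i => if h : i < k + 1 then e ⟨i, h⟩ else d, fun i h => by simp [h], by simp⟩
  obtain ⟨F, hF⟩ : ∃ F : ℕ → A, (∀ i (h : i < k + 1), F i = f ⟨i, h⟩) :=
    ⟨fun i => if h : i < k + 1 then f ⟨i, h⟩ else d, fun i h => by simp [h]⟩
  have A0 : S19.lst (pt false) = a :: b :: c :: S19.Q E F (k + 1) ++ [E (k + 1), z] := by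
    apply S19.lst_eq
    · simp [S19.Q_len, hcard]
    · simp only [List.cons_append, S19.LF, S19.LF_append, S19.Q_len, hEn]
      refine ⟨ht0a, ht0b, ht0c, S19.Q_LF _ _ _ _ _ ?_ ?_, by omega, by omega, trivial⟩
      · intro i hi; rw [hE i hi, ht0e]
      · intro i hi; rw [hF i hi, ht0f]
  have A1 : S19.lst (pt true) = z :: S19.R E F (k + 1) ++ [E (k + 1), c, b, a] := by
    apply S19.lst_eq
    · simp [S19.R_len, hcard]
    · simp only [List.cons_append, S19.LF, S19.LF_append, S19.R_len, hEn]
      refine ⟨ht1z, S19.R_LF _ _ _ _ _ ?_ ?_, by omega, by omega, by omega, by omega, trivial⟩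
      · intro i hi; rw [hF i hi, ht1f]
      · intro i hi; rw [hE i hi, ht1e]
  have B0 : S19.lst (π false) = a :: S19.P E F (k + 1) 0 ++ [b, c, E 0, z] := by
    apply S19.lst_eq
    · simp [S19.P_len, hcard]
    · have hE0 : (π false (E 0) : ℕ) = 2 * (k + 1) + 3 := by
        rw [hE 0 (by omega), h0e]; simp
      simp only [List.cons_append, S19.LF, S19.LF_append, S19.P_len]
      refine ⟨h0a, S19.P_LF _ _ _ _ _ _ ?_ ?_, by omega, by omega, by omega, by omega, trivial⟩
      · intro i hi; rw [Nat.zero_add, hF i hi, h0f]; simp only; omega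
      · intro i hi
        rw [Nat.zero_add]
        by_cases h : i = k
        · subst h; rw [hEn, h0d]; omega
        · rw [hE (i + 1) (by omega), h0e]; simp only [Nat.add_eq_zero_iff, one_ne_zero, and_false, if_false]; omega
  have B1 : S19.lst (π true) = z :: E (k + 1) :: S19.S E F (k + 1) 0 ++ [c, b, a] := by
    apply S19.lst_eq
    · simp [S19.S_len, hcard]
    · simp only [List.cons_append, S19.LF, S19.LF_append, S19.S_len, hEn]
      refine ⟨h1z, h1d, S19.S_LF _ _ _ _ _ _ ?_ ?_, by omega, by omega, by omega, trivial⟩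
      · intro i hi; rw [Nat.zero_add, hF i hi, h1f]
      · intro i hi; rw [Nat.zero_add, hE i hi, h1e]
  obtain ⟨π', hm, l0, l1⟩ := S19.full E F a b c z k pt A0 A1
  have : π' = π := by
    funext ε
    cases ε
    · exact S19.lst_inj _ _ (l0.trans B0.symm)
    · exact S19.lst_inj _ _ (l1.trans B1.symm)
  rw [← this]
  exact hm
end
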